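/- If u : ℤ^d → ℂ is harmonic, then for every k ∈ ℕ and every n ∈ ℕ the k-th forward difference of Q_u satisfies Q_u^{(k)}(n) ≥ 0; that is, Q_u is absolutely monotonic. -/

import Mathlib

open Finset

noncomputable section

/-- The generating set of ℤ^d: the `2d` signed standard unit vectors `±e_i`. -/
def Sd (d : ℕ) : Finset (Fin d → ℤ) :=
  (Finset.univ.image fun i => Pi.single i 1) ∪ (Finset.univ.image fun i => Pi.single i (-1))

/-- `Q u n = E |u(S_n)|²` for the simple random walk on ℤ^d started at 0. -/
noncomputable def Qd (d : ℕ) (u : (Fin d → ℤ) → ℂ) (n : ℕ) : ℝ :=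
  ((2 * d : ℝ))⁻¹ ^ n * ∑ s ∈ Fintype.piFinset (fun _ : Fin n => Sd d), ‖u (∑ i, s i)‖ ^ 2

/-- The discrete Laplacian on ℤ^d. -/
noncomputable def lapD (d : ℕ) (u : (Fin d → ℤ) → ℂ) : (Fin d → ℤ) → ℂ :=
  fun x => (2 * d : ℂ)⁻¹ * ∑ s ∈ Sd d, (u (x + s) - u x)

/-- Forward difference operator: `fwd f n = f (n+1) - f n`. -/
def fwd (f : ℕ → ℝ) : ℕ → ℝ := fun n => f (n + 1) - f n

/-!
At each point a harmonic `u` equals the mean of `u` over one step of the walk, so the increase of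
`‖u‖²` under one step of averaging is a variance: it equals `∑ₛ p(s) ‖Δₛ u‖²`, where
`Δₛ u = u(· + s) - u`. Hence the first difference of `n ↦ E ‖u(x + Sₙ)‖²` is the combination, with
weights `p(s) ≥ 0`, of the same sequences for the functions `Δₛ u`. Because addition is commutative,
each `Δₛ u` is again harmonic, and the argument can be iterated.
-/

open scoped fwdDiff

section Variance

variable {ι E : Type*} [NormedAddCommGroup E] [InnerProductSpace ℝ E]

theorem sum_mul_norm_sub_sq_of_sum_smul_eq {s : Finset ι} {w : ι → ℝ} {v : ι → E} {c : E}
    (hw : ∑ i ∈ s, w i = 1) (hc : ∑ i ∈ s, w i • v i = c) :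
    ∑ i ∈ s, w i * ‖v i - c‖ ^ 2 = ∑ i ∈ s, w i * ‖v i‖ ^ 2 - ‖c‖ ^ 2 := by
  have inner_mean : ∑ i ∈ s, w i * inner ℝ (v i) c = ‖c‖ ^ 2 := by
    simp_rw [← real_inner_smul_left, ← sum_inner, hc, real_inner_self_eq_norm_sq]
  calc ∑ i ∈ s, w i * ‖v i - c‖ ^ 2
      = ∑ i ∈ s, w i * ‖v i‖ ^ 2 - 2 * ∑ i ∈ s, w i * inner ℝ (v i) c
          + (∑ i ∈ s, w i) * ‖c‖ ^ 2 := by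
        rw [mul_sum, sum_mul, ← sum_sub_distrib, ← sum_add_distrib]
        refine sum_congr rfl fun i _ => ?_
        rw [norm_sub_sq_real]
        ring
    _ = ∑ i ∈ s, w i * ‖v i‖ ^ 2 - ‖c‖ ^ 2 := by rw [inner_mean, hw]; ring

end Variance

theorem fwdDiff_pow_apply {R V : Type*} [Semiring R] [AddCommGroup V] [Module R V]
    (A : Module.End R V) (v : V) (n : ℕ) :
    Δ_[1] (fun m => (A ^ m) v) n = (A ^ n) (A v - v) := by
  rw [fwdDiff, pow_succ, Module.End.mul_apply, map_sub]

theorem sum_piFinset_succ {α β : Type*} [AddCommMonoid β] (S : Finset α) (n : ℕ)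
    (f : (Fin (n + 1) → α) → β) :
    ∑ s ∈ Fintype.piFinset (fun _ : Fin (n + 1) => S), f s
      = ∑ a ∈ S, ∑ t ∈ Fintype.piFinset (fun _ : Fin n => S), f (Fin.cons a t) := by
  have piFinset_eq_map :=
    filter_piFinset_eq_map_consEquiv (fun _ : Fin (n + 1) => S) (fun _ => True)
  simp only [filter_true] at piFinset_eq_map
  rw [piFinset_eq_map, sum_map, sum_product]
  rfl

section Walk

variable {M E : Type*} [AddCommMonoid M]

section Mean

variable [AddCommGroup E] [Module ℝ E]

/-- The transition operator `f ↦ E f(· + X)` of the walk on `M` whose step `X` takes the value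
`s ∈ S` with weight `p s`, as a linear endomorphism so that its powers describe `n` steps. -/
def walkMean (S : Finset M) (p : M → ℝ) : Module.End ℝ (M → E) :=
  ∑ s ∈ S, p s • LinearMap.funLeft ℝ E (· + s)

/-- Harmonicity for the walk with step weights `p` on `S`, expressed as the mean-value property. -/
def IsWalkHarmonic (S : Finset M) (p : M → ℝ) (u : M → E) : Prop :=
  walkMean S p u = u

variable {S : Finset M} {p : M → ℝ}

theorem walkMean_apply (f : M → E) (x : M) : walkMean S p f x = ∑ s ∈ S, p s • f (x + s) := by
  simp [walkMean, LinearMap.funLeft_apply]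

theorem walkMean_sub_self_apply (hp : ∑ s ∈ S, p s = 1) (f : M → E) (x : M) :
    walkMean S p f x - f x = ∑ s ∈ S, p s • (f (x + s) - f x) := by
  simp only [walkMean_apply, smul_sub, sum_sub_distrib, ← sum_smul, hp, one_smul]

theorem walkMean_pow_apply (f : M → E) (n : ℕ) (x : M) :
    (walkMean S p ^ n) f x
      = ∑ s ∈ Fintype.piFinset (fun _ : Fin n => S), (∏ i, p (s i)) • f (x + ∑ i, s i) := by
  induction n generalizing x with
  | zero => simp
  | succ n ih =>
    simp only [pow_succ', Module.End.mul_apply, walkMean_apply, ih, sum_piFinset_succ, smul_sum,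
      Fin.prod_univ_succ, Fin.sum_univ_succ, Fin.cons_zero, Fin.cons_succ, mul_smul, add_assoc]

theorem walkMean_fwdDiff (f : M → E) (t : M) :
    walkMean S p (Δ_[t] f) = Δ_[t] (walkMean S p f) := by
  funext x
  simp only [walkMean_apply, fwdDiff, smul_sub, sum_sub_distrib, add_right_comm x t]

theorem IsWalkHarmonic.fwdDiff {u : M → E} (hu : IsWalkHarmonic S p u) (t : M) :
    IsWalkHarmonic S p (Δ_[t] u) := by
  rw [IsWalkHarmonic, walkMean_fwdDiff, hu]

end Mean

section MeanSquare

variable [NormedAddCommGroup E] {S : Finset M} {p : M → ℝ}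

/-- The sequence `n ↦ E ‖u(x + Sₙ)‖²` for the walk `(Sₙ)` with step weights `p` on `S`; the
expectation over `n` steps is encoded as the `n`-th power of the transition operator. -/
def walkMeanSq (S : Finset M) (p : M → ℝ) (u : M → E) (x : M) (n : ℕ) : ℝ :=
  (walkMean S p ^ n) (fun y => ‖u y‖ ^ 2) x

theorem walkMeanSq_nonneg (hp : ∀ s ∈ S, 0 ≤ p s) (u : M → E) (x : M) (n : ℕ) :
    0 ≤ walkMeanSq S p u x n := by
  rw [walkMeanSq, walkMean_pow_apply]
  refine sum_nonneg fun s hs => smul_nonneg (prod_nonneg fun i _ => hp _ ?_) (sq_nonneg _)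
  exact Fintype.mem_piFinset.mp hs i

variable [InnerProductSpace ℝ E]

theorem IsWalkHarmonic.walkMean_norm_sq_sub {u : M → E} (hu : IsWalkHarmonic S p u)
    (hp : ∑ s ∈ S, p s = 1) :
    walkMean S p (fun y => ‖u y‖ ^ 2) - (fun y => ‖u y‖ ^ 2)
      = ∑ s ∈ S, p s • fun y => ‖Δ_[s] u y‖ ^ 2 := by
  funext x
  have mean_value : ∑ s ∈ S, p s • u (x + s) = u x := by rw [← walkMean_apply, hu]
  simp only [Pi.sub_apply, walkMean_apply, Finset.sum_apply, Pi.smul_apply, smul_eq_mul]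
  exact (sum_mul_norm_sub_sq_of_sum_smul_eq hp mean_value).symm

theorem IsWalkHarmonic.fwdDiff_walkMeanSq {u : M → E} (hu : IsWalkHarmonic S p u)
    (hp : ∑ s ∈ S, p s = 1) (x : M) :
    Δ_[1] (walkMeanSq S p u x) = ∑ s ∈ S, p s • walkMeanSq S p (Δ_[s] u) x := by
  funext n
  calc Δ_[1] (walkMeanSq S p u x) n
      = (walkMean S p ^ n) (walkMean S p (fun y => ‖u y‖ ^ 2) - fun y => ‖u y‖ ^ 2) x :=
        congrFun (fwdDiff_pow_apply (walkMean (E := ℝ) S p) (fun y => ‖u y‖ ^ 2) n) x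
    _ = (∑ s ∈ S, p s • walkMeanSq S p (Δ_[s] u) x) n := by
        simp only [hu.walkMean_norm_sq_sub hp, map_sum, map_smul, Finset.sum_apply, Pi.smul_apply,
          walkMeanSq]

theorem Q_absolutely_monotonic_general (hp_nonneg : ∀ s ∈ S, 0 ≤ p s) (hp_sum : ∑ s ∈ S, p s = 1)
    {u : M → E} (hu : IsWalkHarmonic S p u) (x : M) (k n : ℕ) :
    0 ≤ (Δ_[1])^[k] (walkMeanSq S p u x) n := by
  induction k generalizing u with
  | zero => exact walkMeanSq_nonneg hp_nonneg u x n
  | succ k ih =>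
    rw [Function.iterate_succ_apply, hu.fwdDiff_walkMeanSq hp_sum, fwdDiff_iter_finsetSum,
      Finset.sum_apply]
    refine sum_nonneg fun s hs => ?_
    rw [fwdDiff_iter_const_smul]
    exact smul_nonneg (hp_nonneg s hs) (ih (hu.fwdDiff s))

end MeanSquare

end Walk

section SimpleRandomWalk

variable {d : ℕ}

theorem card_Sd (d : ℕ) : #(Sd d) = 2 * d := by
  have single_injective {c : ℤ} (hc : c ≠ 0) :
      Function.Injective fun i : Fin d => (Pi.single i c : Fin d → ℤ) := fun i j hij => by
    by_contra hne
    exact hc (by simpa [hne] using congrFun hij i)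
  have signs_disjoint : Disjoint (univ.image fun i : Fin d => (Pi.single i 1 : Fin d → ℤ))
      (univ.image fun i : Fin d => (Pi.single i (-1) : Fin d → ℤ)) := by
    simp only [disjoint_left, mem_image, mem_univ, true_and]
    rintro _ ⟨i, rfl⟩ ⟨j, hij⟩
    have coordinate_sum : (-1 : ℤ) = 1 := by simpa using congrArg (fun x => ∑ l, x l) hij
    norm_num at coordinate_sum
  rw [Sd, card_union_of_disjoint signs_disjoint,
    card_image_of_injective _ (single_injective one_ne_zero),
    card_image_of_injective _ (single_injective (neg_ne_zero.mpr one_ne_zero)),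
    card_univ, Fintype.card_fin, two_mul]

theorem sum_Sd_inv_two_mul (hd : 1 ≤ d) : ∑ _s ∈ Sd d, (2 * d : ℝ)⁻¹ = 1 := by
  have hd' : (d : ℝ) ≠ 0 := by positivity
  rw [sum_const, card_Sd, nsmul_eq_mul]
  push_cast
  field_simp

theorem lapD_eq_walkMean_sub (hd : 1 ≤ d) (u : (Fin d → ℤ) → ℂ) :
    lapD d u = walkMean (Sd d) (fun _ => (2 * d : ℝ)⁻¹) u - u := by
  funext x
  rw [Pi.sub_apply, walkMean_sub_self_apply (sum_Sd_inv_two_mul hd), lapD, mul_sum]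
  simp [Complex.real_smul]

theorem isWalkHarmonic_iff_lapD_eq_zero (hd : 1 ≤ d) (u : (Fin d → ℤ) → ℂ) :
    IsWalkHarmonic (Sd d) (fun _ => (2 * d : ℝ)⁻¹) u ↔ lapD d u = 0 := by
  rw [lapD_eq_walkMean_sub hd, sub_eq_zero, IsWalkHarmonic]

theorem Qd_eq_walkMeanSq (u : (Fin d → ℤ) → ℂ) :
    Qd d u = walkMeanSq (Sd d) (fun _ => (2 * d : ℝ)⁻¹) u 0 := by
  funext n
  simp only [Qd, walkMeanSq, walkMean_pow_apply, prod_const, card_univ, Fintype.card_fin, zero_add,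
    smul_eq_mul, mul_sum]

theorem fwd_eq_fwdDiff : fwd = fwdDiff 1 := rfl

end SimpleRandomWalk

theorem Q_absolutely_monotonic (d : ℕ) (hd : 1 ≤ d)
    (u : (Fin d → ℤ) → ℂ) (hu : lapD d u = 0) (k n : ℕ) :
    0 ≤ fwd^[k] (Qd d u) n := by
  rw [Qd_eq_walkMeanSq, fwd_eq_fwdDiff]
  exact Q_absolutely_monotonic_general (fun _ _ => by positivity) (sum_Sd_inv_two_mul hd)
    ((isWalkHarmonic_iff_lapD_eq_zero hd u).mpr hu) 0 k n
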